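/- Let (X,d) be a metric space, let φ_n : X → X (n ≥ 1) be a sequence of continuous maps such that the family {φ_n : n ≥ 1} is uniformly equicontinuous, let n₀ ≥ 1 be a natural number, and let k ≥ 1. Then (X, φ_{1,∞}) is n₀-expansive if and only if its k-th iterate system (φ_{1,∞})^k is n₀-expansive. -/

import Mathlib

open Set Metric Filter Topology

/-- `phiComp φ n = φ_n ∘ ⋯ ∘ φ_1` (with `phiComp φ 0 = id`), the compositions of the
non-autonomous system `φ_{1,∞}` given by the maps `φ 1, φ 2, …` (`φ 0` is unused). -/
def phiComp {X : Type*} (φ : ℕ → X → X) : ℕ → X → X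
  | 0 => id
  | n + 1 => φ (n + 1) ∘ phiComp φ n

/-- For a system of homeomorphisms, `phiCompH φ n = φ_n ∘ ⋯ ∘ φ_1` as a homeomorphism. -/
def phiCompH {X : Type*} [TopologicalSpace X] (φ : ℕ → X ≃ₜ X) : ℕ → X ≃ₜ X
  | 0 => Homeomorph.refl X
  | n + 1 => (phiCompH φ n).trans (φ (n + 1))

/-- Two-sided compositions: `phiZ φ i = φ₁^i` for `i ≥ 0` and `φ₁^i = (φ₁^{|i|})⁻¹` for `i < 0`. -/
def phiZ {X : Type*} [TopologicalSpace X] (φ : ℕ → X ≃ₜ X) (i : ℤ) : X → X :=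
  if 0 ≤ i then ⇑(phiCompH φ i.toNat) else ⇑(phiCompH φ (-i).toNat).symm

/-- `segComp φ a m = φ_{a+m} ∘ ⋯ ∘ φ_{a+1}`. -/
def segComp {X : Type*} (φ : ℕ → X → X) (a : ℕ) : ℕ → X → X
  | 0 => id
  | m + 1 => φ (a + m + 1) ∘ segComp φ a m

/-- The `k`-th iterate system `(φ_{1,∞})^k`: its `n`-th map is
`φ_{nk} ∘ ⋯ ∘ φ_{(n-1)k+1}`. -/
def iterateSys {X : Type*} (φ : ℕ → X → X) (k : ℕ) : ℕ → X → X :=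
  fun n => segComp φ ((n - 1) * k) k

/-- `(X, φ_{1,∞})` is `n₀`-expansive (one-sided). -/
def IsNExpansive {X : Type*} [MetricSpace X] (φ : ℕ → X → X) (n₀ : ℕ) : Prop :=
  ∃ c > (0 : ℝ), ∀ x : X,
    {y : X | ∀ i : ℕ, dist (phiComp φ i x) (phiComp φ i y) ≤ c}.encard ≤ (n₀ : ℕ∞)

/-- `(X, φ_{1,∞})` is ℵ₀-expansive (one-sided). -/
def IsAleph0Expansive {X : Type*} [MetricSpace X] (φ : ℕ → X → X) : Prop :=
  ∃ c > (0 : ℝ), ∀ x : X,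
    {y : X | ∀ i : ℕ, dist (phiComp φ i x) (phiComp φ i y) ≤ c}.Countable

/-- `(X, φ_{1,∞})` is `n₀`-expansive in the two-sided sense. -/
def IsNExpansiveZ {X : Type*} [MetricSpace X] (φ : ℕ → X ≃ₜ X) (n₀ : ℕ) : Prop :=
  ∃ c > (0 : ℝ), ∀ x : X,
    {y : X | ∀ i : ℤ, dist (phiZ φ i x) (phiZ φ i y) ≤ c}.encard ≤ (n₀ : ℕ∞)

/-- `(X, φ_{1,∞})` is ℵ₀-expansive in the two-sided sense. -/
def IsAleph0ExpansiveZ {X : Type*} [MetricSpace X] (φ : ℕ → X ≃ₜ X) : Prop :=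
  ∃ c > (0 : ℝ), ∀ x : X,
    {y : X | ∀ i : ℤ, dist (phiZ φ i x) (phiZ φ i y) ≤ c}.Countable

/-- `(X, φ_{1,∞})` is continuum-wise expansive. -/
def IsCwExpansive {X : Type*} [MetricSpace X] (φ : ℕ → X → X) : Prop :=
  ∃ c > (0 : ℝ), ∀ C : Set X, IsCompact C → IsConnected C → C.Nontrivial →
    ∃ n : ℕ, c < Metric.diam (phiComp φ n '' C)

/-- `(X, φ_{1,∞})` is meagre-expansive (one-sided). -/
def IsMeagreExpansive {X : Type*} [MetricSpace X] (φ : ℕ → X → X) : Prop :=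
  ∃ c > (0 : ℝ), ∀ x : X,
    IsNowhereDense {y : X | ∀ i : ℕ, dist (phiComp φ i x) (phiComp φ i y) ≤ c}

/-!
The `k`-th iterate system sees the orbits of `φ_{1,∞}` only at the times divisible by `k`, so
closeness of two `φ`-orbits passes to it with the same constant. Conversely, any time lies fewer
than `k` steps after a multiple of `k`, and the compositions of fewer than `k` consecutive maps form
a uniformly equicontinuous family: `δ`-closeness at the multiples of `k` forces `c`-closeness at all
times.
-/

section Composition

variable {X : Type*} (φ : ℕ → X → X)

theorem phiComp_add (a m : ℕ) : phiComp φ (a + m) = segComp φ a m ∘ phiComp φ a := by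
  induction m with
  | zero => rfl
  | succ m ih => exact congrArg (φ (a + m + 1) ∘ ·) ih

theorem phiComp_iterateSys (k n : ℕ) : phiComp (iterateSys φ k) n = phiComp φ (n * k) := by
  induction n with
  | zero => rw [Nat.zero_mul]; rfl
  | succ n ih =>
    calc phiComp (iterateSys φ k) (n + 1)
        = segComp φ (n * k) k ∘ phiComp (iterateSys φ k) n := rfl
      _ = segComp φ (n * k) k ∘ phiComp φ (n * k) := by rw [ih]
      _ = phiComp φ ((n + 1) * k) := by rw [← phiComp_add, Nat.succ_mul]

end Composition

section Equicontinuity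

theorem uniformEquicontinuous_iff_dist_le {ι α β : Type*} [PseudoMetricSpace α]
    [PseudoMetricSpace β] {F : ι → β → α} :
    UniformEquicontinuous F ↔ ∀ ε > (0 : ℝ), ∃ δ > (0 : ℝ), ∀ x y : β,
      dist x y ≤ δ → ∀ i, dist (F i x) (F i y) ≤ ε :=
  uniformity_basis_dist_le.uniformEquicontinuous_iff uniformity_basis_dist_le

variable {X : Type*} [UniformSpace X] {φ : ℕ → X → X}

theorem uniformEquicontinuous_segComp (hφ : UniformEquicontinuous fun n ↦ φ (n + 1)) (m : ℕ) :
    UniformEquicontinuous fun a ↦ segComp φ a m := by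
  induction m with
  | zero => exact fun U hU ↦ mem_of_superset hU fun _ h _ ↦ h
  | succ m ih =>
    intro U hU
    filter_upwards [ih _ (hφ U hU)] with xy h a using h a (a + m)

theorem uniformEquicontinuous_segComp_lt (hφ : UniformEquicontinuous fun n ↦ φ (n + 1)) (k : ℕ) :
    UniformEquicontinuous fun p : ℕ × Fin k ↦ segComp φ p.1 p.2 := by
  intro U hU
  filter_upwards [eventually_all.2 fun m : Fin k ↦ uniformEquicontinuous_segComp hφ m U hU]
    with xy h p using h p.2 p.1

end Equicontinuity

section DynamicalBall

/-- The dynamical ball `Γ_c(x)`: the points whose forward orbit stays within distance `c` of the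
orbit of `x` at all times. A system is `n₀`-expansive when, for some `c > 0`, all these sets have at
most `n₀` elements. -/
def dynamicalBall {X : Type*} [PseudoMetricSpace X] (φ : ℕ → X → X) (c : ℝ) (x : X) : Set X :=
  {y | ∀ i, dist (phiComp φ i x) (phiComp φ i y) ≤ c}

theorem IsNExpansive.of_dynamicalBall_subset {X : Type*} [MetricSpace X] {φ ψ : ℕ → X → X} {n₀ : ℕ}
    (hφ : IsNExpansive φ n₀)
    (hsub : ∀ c > (0 : ℝ), ∃ δ > (0 : ℝ), ∀ x, dynamicalBall ψ δ x ⊆ dynamicalBall φ c x) :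
    IsNExpansive ψ n₀ := by
  obtain ⟨c, hc, hcard⟩ := hφ
  obtain ⟨δ, hδ, hδc⟩ := hsub c hc
  exact ⟨δ, hδ, fun x ↦ (encard_le_encard (hδc x)).trans (hcard x)⟩

variable {X : Type*} [PseudoMetricSpace X] {φ : ℕ → X → X}

theorem dynamicalBall_subset_iterateSys (k : ℕ) (c : ℝ) (x : X) :
    dynamicalBall φ c x ⊆ dynamicalBall (iterateSys φ k) c x := by
  intro y hy n
  rw [phiComp_iterateSys]
  exact hy (n * k)

theorem exists_dynamicalBall_iterateSys_subset (hφ : UniformEquicontinuous fun n ↦ φ (n + 1))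
    {k : ℕ} (hk : 0 < k) {c : ℝ} (hc : 0 < c) :
    ∃ δ > (0 : ℝ), ∀ x, dynamicalBall (iterateSys φ k) δ x ⊆ dynamicalBall φ c x := by
  obtain ⟨δ, hδ, hseg⟩ :=
    uniformEquicontinuous_iff_dist_le.1 (uniformEquicontinuous_segComp_lt hφ k) c hc
  refine ⟨δ, hδ, fun x y hy i ↦ ?_⟩
  have hstart : dist (phiComp φ (i / k * k) x) (phiComp φ (i / k * k) y) ≤ δ := by
    simpa only [phiComp_iterateSys] using hy (i / k)
  have hsplit : phiComp φ i = segComp φ (i / k * k) (i % k) ∘ phiComp φ (i / k * k) := by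
    rw [← phiComp_add, Nat.div_add_mod']
  rw [hsplit]
  exact hseg _ _ hstart (i / k * k, ⟨i % k, Nat.mod_lt i hk⟩)

end DynamicalBall

/-- For a uniformly equicontinuous family `{φ_n}` and `k ≥ 1`,
`φ_{1,∞}` is `n₀`-expansive iff `(φ_{1,∞})^k` is `n₀`-expansive. -/
theorem stmt4 {X : Type*} [MetricSpace X] (φ : ℕ → X → X)
    (hφ : ∀ n, 1 ≤ n → Continuous (φ n))
    (hequi : ∀ ε > (0 : ℝ), ∃ δ > (0 : ℝ), ∀ n, 1 ≤ n → ∀ x y : X,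
      dist x y ≤ δ → dist (φ n x) (φ n y) ≤ ε)
    (n₀ k : ℕ) (hn₀ : 1 ≤ n₀) (hk : 1 ≤ k) :
    IsNExpansive φ n₀ ↔ IsNExpansive (iterateSys φ k) n₀ := by
  have huniform : UniformEquicontinuous fun n ↦ φ (n + 1) := by
    refine uniformEquicontinuous_iff_dist_le.2 fun ε hε ↦ ?_
    obtain ⟨δ, hδ, hdist⟩ := hequi ε hε
    exact ⟨δ, hδ, fun x y hxy n ↦ hdist (n + 1) n.succ_pos x y hxy⟩
  constructor
  · intro h
    exact h.of_dynamicalBall_subset fun c hc ↦ exists_dynamicalBall_iterateSys_subset huniform hk hc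
  · intro h
    exact h.of_dynamicalBall_subset fun c hc ↦ ⟨c, hc, dynamicalBall_subset_iterateSys k c⟩
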